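/- arXiv:1203.3282 — 2 statements merged into one kernel-verified Lean document; each statement's English description precedes it below -/
import Mathlib

section
/- Let m ≥ 1. The restriction of the encoding map z ↦ z·G_{2^m} to the set of vectors z ∈ U_m^{2^m} whose component z_j is (the class of) a polynomial of degree at most m−1−w(j) for every index j ∈ {0,1}^m (so z_j = 0 when w(j) = m), where w(j) is the Hamming weight of j, is a bijection onto the code C_{2^m} = { z·G_{2^m} : z ∈ U_m^{2^m} }. In particular the codewords of C_{2^m} are in one-to-one correspondence with tuples of Σ_{q=0}^{m-1} (m−q)·C(m,q) = m·2^{m-1} information bits. -/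
open Polynomial

noncomputable section

/-- `F2` is the binary field. -/
abbrev F2 := ZMod 2

/-- `Um m` is the polynomial quotient ring `F₂[u] / (u^m)`. -/
abbrev Um (m : ℕ) := Polynomial F2 ⧸ Ideal.span {(X : Polynomial F2) ^ m}

/-- `uu m` is the class of the variable in `Um m`. -/
def uu (m : ℕ) : Um m := Ideal.Quotient.mk _ (X : Polynomial F2)

/-- `Gmat m` is the `m`-fold Kronecker power over `Um m` of `[[1,1],[0,u]]`. -/
def Gmat (m : ℕ) : Matrix (Fin m → Fin 2) (Fin m → Fin 2) (Um m) :=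
  Matrix.of fun j k => ∏ t, (!![1, 1; 0, uu m] : Matrix (Fin 2) (Fin 2) (Um m)) (j t) (k t)

/-- `w j` is the Hamming weight of the binary string `j`. -/
def w {m : ℕ} (j : Fin m → Fin 2) : ℕ := ∑ t, (j t : ℕ)

lemma w_le {m : ℕ} (j : Fin m → Fin 2) : w j ≤ m := by
  unfold w
  calc ∑ t, (j t : ℕ) ≤ ∑ _t : Fin m, 1 := Finset.sum_le_sum (fun t _ => by omega)
    _ = m := by simp

open Classical in
lemma Gmat_apply {m : ℕ} (j k : Fin m → Fin 2) :
    Gmat m j k = if j ≤ k then uu m ^ w j else 0 := by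
  unfold Gmat w
  rw [Matrix.of_apply]
  split_ifs with h
  · rw [← Finset.prod_pow_eq_pow_sum]
    refine Finset.prod_congr rfl fun t _ => ?_
    have ht := h t
    generalize j t = a at *
    generalize k t = b at *
    fin_cases a <;> fin_cases b <;> simp_all
  · rw [Pi.le_def] at h
    push Not at h
    obtain ⟨t, ht⟩ := h
    refine Finset.prod_eq_zero (Finset.mem_univ t) ?_
    generalize j t = a at *
    generalize k t = b at *
    fin_cases a <;> fin_cases b <;> simp_all

open Classical in
lemma vecMul_apply' {m : ℕ} (z : (Fin m → Fin 2) → Um m) (k : Fin m → Fin 2) :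
    Matrix.vecMul z (Gmat m) k = ∑ j, if j ≤ k then z j * uu m ^ w j else 0 := by
  simp only [Matrix.vecMul, dotProduct, Gmat_apply, mul_ite, mul_zero]

open Classical in
lemma triang {m : ℕ} (z z' : (Fin m → Fin 2) → Um m) :
    Matrix.vecMul z (Gmat m) = Matrix.vecMul z' (Gmat m) ↔
      ∀ j, z j * uu m ^ w j = z' j * uu m ^ w j := by
  constructor
  · intro h k
    induction k using WellFoundedLT.induction with
    | ind k ih =>
      have hk := congrFun h k
      rw [vecMul_apply', vecMul_apply', ← Finset.add_sum_erase _ _ (Finset.mem_univ k),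
        ← Finset.add_sum_erase _ _ (Finset.mem_univ k), if_pos le_rfl, if_pos le_rfl] at hk
      have e : ∑ j ∈ Finset.univ.erase k, (if j ≤ k then z j * uu m ^ w j else 0) =
          ∑ j ∈ Finset.univ.erase k, (if j ≤ k then z' j * uu m ^ w j else 0) := by
        refine Finset.sum_congr rfl fun j hj => ?_
        split_ifs with hjk
        · exact ih j (lt_of_le_of_ne hjk (Finset.ne_of_mem_erase hj))
        · rfl
      rw [e] at hk
      exact add_right_cancel hk
  · intro h
    funext k
    simp only [vecMul_apply', h]

lemma mk_iff {m : ℕ} (j : Fin m → Fin 2) (p q : Polynomial F2) :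
    (Ideal.Quotient.mk (Ideal.span {(X : Polynomial F2) ^ m}) p) * uu m ^ w j =
      (Ideal.Quotient.mk (Ideal.span {(X : Polynomial F2) ^ m}) q) * uu m ^ w j ↔
      (X : Polynomial F2) ^ (m - w j) ∣ p - q := by
  unfold uu
  rw [← map_pow, ← map_mul, ← map_mul, Ideal.Quotient.eq, Ideal.mem_span_singleton, ← sub_mul]
  have e : (X : Polynomial F2) ^ m = X ^ (m - w j) * X ^ w j := by
    rw [← pow_add, Nat.sub_add_cancel (w_le j)]
  rw [e]
  exact mul_dvd_mul_iff_right (pow_ne_zero _ X_ne_zero)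

lemma eq_of_deg {n : ℕ} {p q : Polynomial F2} (hp : p.degree < (n : WithBot ℕ))
    (hq : q.degree < (n : WithBot ℕ)) (h : (X : Polynomial F2) ^ n ∣ p - q) : p = q := by
  refine sub_eq_zero.mp (eq_zero_of_dvd_of_degree_lt h ?_)
  rw [degree_X_pow]
  exact lt_of_le_of_lt (degree_sub_le _ _) (max_lt hp hq)

lemma bij (m : ℕ) :
    Set.BijOn (fun z => Matrix.vecMul z (Gmat m))
      {z : (Fin m → Fin 2) → Um m | ∀ j, ∃ p : Polynomial F2,
        p.degree < ((m - w j : ℕ) : WithBot ℕ) ∧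
        Ideal.Quotient.mk (Ideal.span {(X : Polynomial F2) ^ m}) p = z j}
      {x : (Fin m → Fin 2) → Um m | ∃ z, x = Matrix.vecMul z (Gmat m)} := by
  refine ⟨fun z _ => ⟨z, rfl⟩, ?_, ?_⟩
  · intro z hz z' hz' h
    have h' := (triang z z').1 h
    funext j
    obtain ⟨p, hp, hpz⟩ := hz j
    obtain ⟨q, hq, hqz⟩ := hz' j
    have hj := h' j
    rw [← hpz, ← hqz, mk_iff] at hj
    rw [← hpz, ← hqz, eq_of_deg hp hq hj]
  · rintro x ⟨z, rfl⟩
    choose P hP using fun j => Ideal.Quotient.mk_surjective (z j)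
    refine ⟨fun j => Ideal.Quotient.mk _ (P j %ₘ X ^ (m - w j)), fun j => ⟨_, ?_, rfl⟩, ?_⟩
    · have := degree_modByMonic_lt (P j) (monic_X_pow (R := F2) (m - w j))
      rwa [degree_X_pow] at this
    · refine (triang _ _).2 fun j => ?_
      rw [← hP j, mk_iff, ← dvd_neg, neg_sub]
      refine ⟨P j /ₘ X ^ (m - w j), ?_⟩
      rw [sub_eq_iff_eq_add, add_comm]
      exact (modByMonic_add_div _ _).symm

lemma sum_w (m : ℕ) (hm : 1 ≤ m) :
    ∑ j : Fin m → Fin 2, (m - w j) = m * 2 ^ (m - 1) := by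
  have h1 : ∑ j : Fin m → Fin 2, (m - w j) = ∑ j : Fin m → Fin 2, w j := by
    refine Fintype.sum_equiv (Equiv.arrowCongr (Equiv.refl _) Fin.revPerm) _ _ fun j => ?_
    have : w ((Equiv.arrowCongr (Equiv.refl (Fin m)) Fin.revPerm) j) + w j = m := by
      unfold w
      rw [← Finset.sum_add_distrib]
      trans ∑ _t : Fin m, 1
      · refine Finset.sum_congr rfl fun t _ => ?_
        simp [Fin.val_rev]
        omega
      · simp
    omega
  have h2 : ∑ j : Fin m → Fin 2, (m - w j) + ∑ j : Fin m → Fin 2, w j = m * 2 ^ m := by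
    rw [← Finset.sum_add_distrib, Finset.sum_congr rfl (fun j _ => Nat.sub_add_cancel (w_le j))]
    simp [mul_comm]
  obtain ⟨n, rfl⟩ : ∃ n, m = n + 1 := ⟨m - 1, by omega⟩
  rw [pow_succ, ← mul_assoc] at h2
  rw [Nat.add_sub_cancel]
  omega

lemma sum_choose (m : ℕ) :
    (∑ q ∈ Finset.range m, (m - q) * m.choose q) = m * 2 ^ (m - 1) := by
  have h : ∑ q ∈ Finset.range (m + 1), (m - q) * m.choose q = m * 2 ^ (m - 1) := by
    rw [← Nat.sum_range_mul_choose, ← Finset.sum_range_reflect (fun q => q * m.choose q)]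
    refine Finset.sum_congr rfl fun q hq => ?_
    have hq' : q ≤ m := Nat.lt_succ_iff.1 (Finset.mem_range.1 hq)
    simp only [Nat.add_sub_cancel]
    rw [Nat.choose_symm hq']
  rw [Finset.sum_range_succ] at h
  simpa using h

lemma card_code (m : ℕ) (hm : 1 ≤ m) :
    Nat.card {z : (Fin m → Fin 2) → Um m | ∀ j, ∃ p : Polynomial F2,
        p.degree < ((m - w j : ℕ) : WithBot ℕ) ∧
        Ideal.Quotient.mk (Ideal.span {(X : Polynomial F2) ^ m}) p = z j} =
      2 ^ (m * 2 ^ (m - 1)) := by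
  have e : (∀ j : Fin m → Fin 2, degreeLT F2 (m - w j)) ≃
      {z : (Fin m → Fin 2) → Um m | ∀ j, ∃ p : Polynomial F2,
        p.degree < ((m - w j : ℕ) : WithBot ℕ) ∧
        Ideal.Quotient.mk (Ideal.span {(X : Polynomial F2) ^ m}) p = z j} := by
    refine Equiv.ofBijective (fun p => ⟨fun j => Ideal.Quotient.mk _ (p j : Polynomial F2),
      fun j => ⟨p j, mem_degreeLT.1 (p j).2, rfl⟩⟩) ⟨?_, ?_⟩
    · intro p q h
      funext j
      have hj := congrFun (congrArg Subtype.val h) j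
      have := (mk_iff j (p j : Polynomial F2) (q j)).1 (congrArg (· * uu m ^ w j) hj)
      exact Subtype.ext (eq_of_deg (mem_degreeLT.1 (p j).2) (mem_degreeLT.1 (q j).2) this)
    · rintro ⟨z, hz⟩
      have hz' := hz
      choose p hp hpz using hz'
      exact ⟨fun j => ⟨p j, mem_degreeLT.2 (hp j)⟩, Subtype.ext (funext hpz)⟩
  rw [← Nat.card_congr e, Nat.card_pi, ← sum_w m hm, ← Finset.prod_pow_eq_pow_sum]
  refine Finset.prod_congr rfl fun j _ => ?_
  rw [Nat.card_congr (degreeLTEquiv F2 (m - w j)).toEquiv]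
  simp [Nat.card_eq_fintype_card, ZMod.card]

/-- The encoding map `z ↦ z · G_{2^m}` restricted to the vectors `z` whose component `z j`
is the class of a polynomial of degree `< m - w(j)` (i.e. of degree at most `m - 1 - w(j)`,
so `z j = 0` when `w(j) = m`) is a bijection onto the code `C_{2^m}`.  In particular, the
codewords are in one-to-one correspondence with tuples of
`Σ_{q=0}^{m-1} (m-q)·C(m,q) = m·2^{m-1}` information bits. -/
theorem stmt3 (m : ℕ) (hm : 1 ≤ m) :
    Set.BijOn (fun z => Matrix.vecMul z (Gmat m))
      {z : (Fin m → Fin 2) → Um m | ∀ j, ∃ p : Polynomial F2,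
        p.degree < ((m - w j : ℕ) : WithBot ℕ) ∧
        Ideal.Quotient.mk (Ideal.span {(X : Polynomial F2) ^ m}) p = z j}
      {x : (Fin m → Fin 2) → Um m | ∃ z, x = Matrix.vecMul z (Gmat m)} ∧
    (∑ q ∈ Finset.range m, (m - q) * m.choose q) = m * 2 ^ (m - 1) ∧
    Nat.card {x : (Fin m → Fin 2) → Um m | ∃ z, x = Matrix.vecMul z (Gmat m)} =
      2 ^ (m * 2 ^ (m - 1)) := by
  refine ⟨bij m, sum_choose m, ?_⟩
  rw [← card_code m hm]
  exact (Nat.card_congr (bij m).equiv).symm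

end
end

section
/- Let m ≥ 1 and n = 2^m. The Construction A′ lattice { (1+i)^m a + Φ(c) : a ∈ ℤ[i]^n, c ∈ C_{2^m} }, where Φ is applied componentwise, equals the Construction D Barnes–Wall lattice { (1+i)^m a + Σ_{r=0}^{m-1} (1+i)^r ψ(c_r) : a ∈ ℤ[i]^n, c_r ∈ RM(r,m) for 0 ≤ r ≤ m−1 }, where ψ : F₂ → ℤ[i] with ψ(0)=0, ψ(1)=1 is applied componentwise. -/
open Polynomial

noncomputable section

/-- The linear code `C_{2^m} = { z · G_{2^m} : z ∈ U_m^{2^m} }`. -/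
def Code (m : ℕ) : Set ((Fin m → Fin 2) → Um m) :=
  {c | ∃ z, c = Matrix.vecMul z (Gmat m)}

/-- `Bmat m` is the `m`-fold Kronecker power over `F₂` of `[[1,1],[0,1]]`. -/
def Bmat (m : ℕ) : Matrix (Fin m → Fin 2) (Fin m → Fin 2) F2 :=
  Matrix.of fun j k => ∏ t, (!![1, 1; 0, 1] : Matrix (Fin 2) (Fin 2) F2) (j t) (k t)

/-- The Reed–Muller code `RM(r,m)`: the `F₂`-span of the rows of `Bmat m` whose row
index has Hamming weight at most `r`. -/
def RM (m r : ℕ) : Submodule F2 ((Fin m → Fin 2) → F2) :=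
  Submodule.span F2 ((fun j => Bmat m j) '' {j | w j ≤ r})

/-- The imaginary unit `i` of the Gaussian integers. -/
def gi : GaussianInt := ⟨0, 1⟩

/-- `psiG` sends `0 ↦ 0` and `1 ↦ 1` from `F₂` to `ℤ[i]`. -/
def psiG (b : F2) : GaussianInt := (b.val : GaussianInt)

lemma Gmat_apply_s12 (m : ℕ) (j k : Fin m → Fin 2) :
    Gmat m j k = Ideal.Quotient.mk (Ideal.span {(X : Polynomial F2) ^ m})
      (X ^ (w j) * C (Bmat m j k)) := by
  have h : ∀ a b : Fin 2, (!![1, 1; 0, uu m] : Matrix (Fin 2) (Fin 2) (Um m)) a b =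
      Ideal.Quotient.mk (Ideal.span {(X : Polynomial F2) ^ m})
        (X ^ (a : ℕ) * C ((!![1, 1; 0, 1] : Matrix (Fin 2) (Fin 2) F2) a b)) := by
    intro a b
    fin_cases a <;> fin_cases b <;> simp [uu]
  simp only [Gmat, Bmat, Matrix.of_apply, w, h]
  rw [← map_prod, Finset.prod_mul_distrib, Finset.prod_pow_eq_pow_sum, map_prod C]

lemma mem_RM (m r : ℕ) (c : (Fin m → Fin 2) → F2) (hc : c ∈ RM m r) :
    ∃ α : (Fin m → Fin 2) → F2, (∀ j, r < w j → α j = 0) ∧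
      ∀ k, c k = ∑ j, α j * Bmat m j k := by
  unfold RM at hc
  induction hc using Submodule.span_induction with
  | mem x hx =>
    obtain ⟨j, hj, rfl⟩ := hx
    refine ⟨Pi.single j 1, ?_, ?_⟩
    · intro j' h
      have : j' ≠ j := by
        rintro rfl
        exact absurd hj (not_le.mpr h)
      simp [this]
    · intro k
      simp [Pi.single_apply]
  | zero => exact ⟨0, by simp, by simp⟩
  | add x y _ _ hx hy =>
    obtain ⟨a, ha, ha'⟩ := hx
    obtain ⟨b, hb, hb'⟩ := hy
    refine ⟨a + b, ?_, ?_⟩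
    · intro j h
      simp [ha j h, hb j h]
    · intro k
      simp [ha', hb', add_mul, Finset.sum_add_distrib]
  | smul s x _ hx =>
    obtain ⟨a, ha, ha'⟩ := hx
    refine ⟨s • a, ?_, ?_⟩
    · intro j h
      simp [ha j h]
    · intro k
      simp [ha', mul_assoc, Finset.mul_sum]

lemma Phi_all (m : ℕ) (Φ : Um m → GaussianInt)
    (hΦ : ∀ p : Polynomial F2, p.degree < (m : WithBot ℕ) →
      Φ (Ideal.Quotient.mk (Ideal.span {(X : Polynomial F2) ^ m}) p) =
        ∑ j ∈ Finset.range m, psiG (p.coeff j) * (1 + gi) ^ j) (p : Polynomial F2) :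
    Φ (Ideal.Quotient.mk (Ideal.span {(X : Polynomial F2) ^ m}) p) =
        ∑ r : Fin m, (1 + gi) ^ (r : ℕ) * psiG (p.coeff r) := by
  set q : Polynomial F2 := ∑ j ∈ Finset.range m, C (p.coeff j) * X ^ j with hq
  have hc : ∀ d < m, q.coeff d = p.coeff d := by
    intro d hd
    simp [hq, Polynomial.coeff_X_pow, hd]
  have hpq : Ideal.Quotient.mk (Ideal.span {(X : Polynomial F2) ^ m}) p =
      Ideal.Quotient.mk (Ideal.span {(X : Polynomial F2) ^ m}) q := by
    rw [Ideal.Quotient.eq, Ideal.mem_span_singleton, Polynomial.X_pow_dvd_iff]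
    intro d hd
    simp [hc d hd]
  have hdeg : q.degree < (m : WithBot ℕ) := by
    rw [Polynomial.degree_lt_iff_coeff_zero]
    intro d hd
    have : ¬ d < m := by omega
    simp [hq, Polynomial.coeff_X_pow, this]
  rw [hpq, hΦ q hdeg, Finset.sum_range]
  refine Finset.sum_congr rfl fun r _ => ?_
  rw [hc r r.2, mul_comm]

/-- The Construction A′ lattice `{ (1+i)^m a + Φ(c) : a ∈ ℤ[i]^n, c ∈ C_{2^m} }`
coincides with the Construction D Barnes–Wall lattice
`{ (1+i)^m a + Σ_{r=0}^{m-1} (1+i)^r ψ(c_r) : a ∈ ℤ[i]^n, c_r ∈ RM(r,m) }`. -/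
theorem stmt12 (m : ℕ) (hm : 1 ≤ m)
    (Φ : Um m → GaussianInt)
    (hΦ : ∀ p : Polynomial F2, p.degree < (m : WithBot ℕ) →
      Φ (Ideal.Quotient.mk (Ideal.span {(X : Polynomial F2) ^ m}) p) =
        ∑ j ∈ Finset.range m, psiG (p.coeff j) * (1 + gi) ^ j) :
    {v : (Fin m → Fin 2) → GaussianInt |
        ∃ a : (Fin m → Fin 2) → GaussianInt, ∃ c ∈ Code m,
          v = fun k => (1 + gi) ^ m * a k + Φ (c k)} =
      {v : (Fin m → Fin 2) → GaussianInt |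
        ∃ a : (Fin m → Fin 2) → GaussianInt,
        ∃ c : Fin m → ((Fin m → Fin 2) → F2),
          (∀ r : Fin m, c r ∈ RM m (r : ℕ)) ∧
          v = fun k => (1 + gi) ^ m * a k +
            ∑ r : Fin m, (1 + gi) ^ (r : ℕ) * psiG (c r k)} := by
  ext v
  simp only [Set.mem_ofPred_eq]
  constructor
  · rintro ⟨a, c, ⟨z, rfl⟩, rfl⟩
    choose Z hZ using fun j => Ideal.Quotient.mk_surjective (z j)
    have hc : ∀ k, Matrix.vecMul z (Gmat m) k =
        Ideal.Quotient.mk (Ideal.span {(X : Polynomial F2) ^ m})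
          (∑ j, Z j * (X ^ (w j) * C (Bmat m j k))) := by
      intro k
      rw [map_sum]
      refine Finset.sum_congr rfl fun j _ => ?_
      beta_reduce
      rw [Gmat_apply_s12, ← hZ, ← map_mul]
    refine ⟨a, fun r k => (∑ j, Z j * (X ^ (w j) * C (Bmat m j k))).coeff r, ?_, ?_⟩
    · intro r
      have : (fun k => (∑ j, Z j * (X ^ (w j) * C (Bmat m j k))).coeff (r : ℕ)) =
          ∑ j, (if w j ≤ (r : ℕ) then (Z j).coeff (r - w j) else 0) • Bmat m j := by
        funext k
        rw [Polynomial.finsetSum_coeff, Finset.sum_apply]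
        refine Finset.sum_congr rfl fun j _ => ?_
        rw [← mul_assoc, Polynomial.coeff_mul_C, Polynomial.coeff_mul_X_pow']
        rfl
      beta_reduce
      rw [this]
      refine Submodule.sum_mem _ fun j _ => ?_
      split_ifs with h
      · exact Submodule.smul_mem _ _ (Submodule.subset_span ⟨j, h, rfl⟩)
      · rw [zero_smul]
        exact Submodule.zero_mem _
    · funext k
      rw [hc, Phi_all m Φ hΦ]
  · rintro ⟨a, c, hc, rfl⟩
    choose α hα hα' using fun r : Fin m => mem_RM m r (c r) (hc r)
    refine ⟨a, fun k => Ideal.Quotient.mk (Ideal.span {(X : Polynomial F2) ^ m})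
      (∑ r : Fin m, C (c r k) * X ^ (r : ℕ)), ?_, ?_⟩
    · refine ⟨fun j => Ideal.Quotient.mk (Ideal.span {(X : Polynomial F2) ^ m})
        (∑ r : Fin m, C (α r j) * X ^ ((r : ℕ) - w j)), ?_⟩
      funext k
      simp only [Matrix.vecMul, dotProduct, Gmat_apply_s12]
      simp only [← map_mul]
      rw [← map_sum]
      congr 1
      simp only [Finset.sum_mul]
      rw [Finset.sum_comm]
      refine Finset.sum_congr rfl fun r _ => ?_
      rw [hα' r k, map_sum, Finset.sum_mul]
      refine Finset.sum_congr rfl fun j _ => ?_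
      by_cases h : (r : ℕ) < w j
      · simp [hα r j h]
      · have e : (X : Polynomial F2) ^ (r : ℕ) = X ^ ((r : ℕ) - w j) * X ^ (w j) := by
          rw [← pow_add]
          congr 1
          omega
        rw [e, map_mul]
        ring
    · funext k
      rw [Phi_all m Φ hΦ]
      congr 1
      refine Finset.sum_congr rfl fun r _ => ?_
      congr 2
      rw [Polynomial.finsetSum_coeff]
      simp [Polynomial.coeff_X_pow, Fin.val_inj]

end
end
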